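/- arXiv:2106.13760 — 3 statements merged into one kernel-verified Lean document; each statement's English description precedes it below -/
import Mathlib

section
/- Let m ≥ 1, r ≥ 0, let (Q_0,P_0), …, (Q_r,P_r) be r+1 pairs of m×m matrices of independent commuting indeterminates, and set A_k := Σ_{i=0}^{r−k} Q_i P_{i+k} for 0 ≤ k ≤ r. For 1 ≤ s ≤ r define I_s := Σ_{0 ≤ j,l ≤ r, j+l = r+s−1} Tr(A_j A_l). Then I_s is a Casimir of the Takiff–algebra Poisson structure: with respect to the canonical Poisson bracket, {(A_i)_{ab}, I_s} = 0 for all 0 ≤ i ≤ r, all 1 ≤ a,b ≤ m, and all 1 ≤ s ≤ r. (I_s is the residue at z = 0 of z^{r+s}·Tr A(z)^2 for A(z) = Σ_{k=0}^{r} A_k z^{−k−1}.) -/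
/-!
The quadratic spectral invariants `I_s = Σ_{j+l = r+s−1} Tr(A_j A_l)` are Casimirs of the
Takiff-algebra Poisson structure.
-/

open MvPolynomial

noncomputable section

/-- Index type for the entries of `N` pairs of `m × m` matrices of indeterminates. -/
abbrev Idx (N m : ℕ) := Fin N × Bool × Fin m × Fin m

/-- The matrix `Q_α` of indeterminates. -/
def Qm (N m : ℕ) (α : Fin N) : Matrix (Fin m) (Fin m) (MvPolynomial (Idx N m) ℂ) :=
  Matrix.of fun i j => X (α, false, i, j)

/-- The matrix `P_α` of indeterminates. -/
def Pm (N m : ℕ) (α : Fin N) : Matrix (Fin m) (Fin m) (MvPolynomial (Idx N m) ℂ) :=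
  Matrix.of fun i j => X (α, true, i, j)

/-- The canonical Poisson bracket. -/
def pois {N m : ℕ} (f g : MvPolynomial (Idx N m) ℂ) : MvPolynomial (Idx N m) ℂ :=
  ∑ α : Fin N, ∑ i : Fin m, ∑ j : Fin m,
    (pderiv (α, true, i, j) f * pderiv (α, false, j, i) g
      - pderiv (α, true, i, j) g * pderiv (α, false, j, i) f)

/-- The Takiff parametrisation `A_k := Σ_{i=0}^{r−k} Q_i P_{i+k}` (given `r+1` pairs). -/
def Amat (m r : ℕ) (k : ℕ) : Matrix (Fin m) (Fin m) (MvPolynomial (Idx (r+1) m) ℂ) :=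
  ∑ i : Fin (r+1), ∑ j : Fin (r+1),
    if (j : ℕ) = (i : ℕ) + k then Qm (r+1) m i * Pm (r+1) m j else 0

/-- The quadratic Casimir `I_s := Σ_{0 ≤ j,l ≤ r, j+l = r+s−1} Tr(A_j A_l)`
(stated here avoiding natural subtraction via `j + l + 1 = r + s`). -/
def Icas (m r : ℕ) (s : ℕ) : MvPolynomial (Idx (r+1) m) ℂ :=
  ∑ j ∈ Finset.range (r+1), ∑ l ∈ Finset.range (r+1),
    if j + l + 1 = r + s then (Amat m r j * Amat m r l).trace else 0

end

/-!
Attach to a scalar matrix `S` the matrix `A_S := ∑ u v, S u v • Q_u P_v`. The Hamiltonian vector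
field of `(A_S)_{ab}` sends `Q_u` to `E_{ba} ∑ w, S w u • Q_w` and `P_v` to
`-(∑ w, S v w • P_w) E_{ba}`, hence `{(A_S)_{ab}, A_T} = E_{ba} A_{ST} - A_{TS} E_{ba}`. The Takiff
matrices are `A_k = A_S` for `S` the `k`-th power of the nilpotent shift, so
`{(A_i)_{ab}, A_j} = [E_{ba}, A_{i+j}]`, and cyclicity of the trace gives
`{(A_i)_{ab}, I_s} = 2 Tr (E_{ba} ∑_{j+l=r+s-1} [A_{i+j}, A_l])`. Because `r + s - 1 ≥ r` and
`A_l = 0` for `l > r`, the inner sum is the full antidiagonal sum of `[A_x, A_l]` over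
`x + l = r + s - 1 + i`, which vanishes by antisymmetry.
-/

open Finset Matrix

theorem sum_antidiagonal_shift_eq {M : Type*} [AddCommMonoid M] {n : ℕ} (i : ℕ) {f : ℕ → ℕ → M}
    (hf : ∀ x l, n < l → f x l = 0) :
    ∑ p ∈ antidiagonal n, f (i + p.1) p.2 = ∑ p ∈ antidiagonal (n + i), f p.1 p.2 := by
  induction i generalizing f with
  | zero => simp only [zero_add, add_zero]
  | succ i ih =>
    rw [← add_assoc, Nat.sum_antidiagonal_succ, hf 0 (n + i + 1) (by omega), zero_add,
      ← ih fun x l hl => hf (x + 1) l hl]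
    simp only [add_right_comm i 1]

theorem sum_antidiagonal_lie_eq_zero {L : Type*} [NonUnitalNonAssocRing L] (B : ℕ → L) (n : ℕ) :
    ∑ p ∈ antidiagonal n, ⁅B p.1, B p.2⁆ = 0 := by
  simp only [Ring.lie_def, sum_sub_distrib, sub_eq_zero]
  exact (Nat.sum_antidiagonal_swap (f := fun p => B p.1 * B p.2)).symm

theorem sum_antidiagonal_lie_shift_eq_zero {L : Type*} [NonUnitalNonAssocRing L] {B : ℕ → L}
    {n : ℕ} (hB : ∀ k, n < k → B k = 0) (i : ℕ) :
    ∑ p ∈ antidiagonal n, ⁅B (i + p.1), B p.2⁆ = 0 := by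
  have hlie (x l : ℕ) (hl : n < l) : ⁅B x, B l⁆ = 0 := by
    rw [hB l hl, Ring.lie_def, mul_zero, zero_mul, sub_zero]
  rw [sum_antidiagonal_shift_eq i hlie, sum_antidiagonal_lie_eq_zero]

theorem trace_lie_mul {ι A : Type*} [Fintype ι] [CommRing A] (E M N : Matrix ι ι A) :
    (⁅E, M⁆ * N).trace = (E * ⁅M, N⁆).trace := by
  simp only [Ring.lie_def, sub_mul, mul_sub, trace_sub, ← mul_assoc, trace_mul_cycle E N M]

section EntrywiseDerivation

variable {R A ι κ μ : Type*} [CommSemiring R] [CommSemiring A] [Algebra R A]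

/-- The action of a derivation on matrices, entry by entry. For the derivation `{f, ·}` this is the
entrywise Poisson bracket. -/
def entrywise (D : Derivation R A A) : Matrix ι κ A →ₗ[R] Matrix ι κ A :=
  (D : A →ₗ[R] A).mapMatrix

theorem entrywise_apply (D : Derivation R A A) (M : Matrix ι κ A) (a : ι) (b : κ) :
    entrywise D M a b = D (M a b) := rfl

theorem entrywise_mul [Fintype κ] (D : Derivation R A A) (M : Matrix ι κ A) (N : Matrix κ μ A) :
    entrywise D (M * N) = entrywise D M * N + M * entrywise D N := by
  ext a b
  simp only [entrywise_apply, mul_apply, Matrix.add_apply, map_sum, Derivation.leibniz, smul_eq_mul,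
    ← sum_add_distrib]
  exact sum_congr rfl fun c _ => by ring

theorem map_trace_eq_trace_entrywise [Fintype ι] (D : Derivation R A A) (M : Matrix ι ι A) :
    D M.trace = (entrywise D M).trace :=
  AddMonoidHom.map_trace D M

end EntrywiseDerivation

theorem map_sum_antidiagonal_trace_mul_eq_zero {R A ι : Type*} [CommSemiring R] [CommRing A]
    [Algebra R A] [Fintype ι] (D : Derivation R A A) {B : ℕ → Matrix ι ι A}
    {n i : ℕ} (hB : ∀ k, n < k → B k = 0) (E : Matrix ι ι A)
    (hD : ∀ j, entrywise D (B j) = ⁅E, B (i + j)⁆) :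
    D (∑ p ∈ antidiagonal n, (B p.1 * B p.2).trace) = 0 := by
  have first_factor : ∑ p ∈ antidiagonal n, (entrywise D (B p.1) * B p.2).trace = 0 := by
    simp only [hD, trace_lie_mul, ← trace_sum, ← mul_sum]
    rw [sum_antidiagonal_lie_shift_eq_zero hB, mul_zero, trace_zero]
  have second_factor : ∑ p ∈ antidiagonal n, (B p.1 * entrywise D (B p.2)).trace = 0 := by
    rw [← Nat.sum_antidiagonal_swap, ← first_factor]
    exact sum_congr rfl fun p _ => trace_mul_comm _ _
  simp only [map_sum, map_trace_eq_trace_entrywise, entrywise_mul, trace_add, sum_add_distrib,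
    first_factor, second_factor, add_zero]

theorem mul_single_one_apply_eq_single_one_mul_apply {ι κ μ A : Type*} [Fintype ι] [Fintype κ]
    [DecidableEq ι] [DecidableEq κ] [DecidableEq μ] [NonAssocSemiring A] (M : Matrix ι κ A)
    (a : ι) (b c : μ) (d : κ) :
    (M * single d c (1 : A) : Matrix ι μ A) a b = (single b a (1 : A) * M : Matrix μ κ A) c d := by
  by_cases h : b = c
  · subst h
    rw [mul_single_apply_same, single_mul_apply_same, mul_one, one_mul]
  · rw [mul_single_apply_of_ne _ _ _ _ _ h, single_mul_apply_of_ne _ _ _ _ _ (Ne.symm h)]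

section CanonicalBracket

variable {N m : ℕ}

/-- The Hamiltonian vector field `{f, ·}` of the canonical Poisson bracket, bundled as a
derivation. -/
noncomputable def hamiltonian (f : MvPolynomial (Idx N m) ℂ) :
    Derivation ℂ (MvPolynomial (Idx N m) ℂ) (MvPolynomial (Idx N m) ℂ) :=
  ∑ α : Fin N, ∑ i : Fin m, ∑ j : Fin m,
    (pderiv (α, true, i, j) f • pderiv (α, false, j, i)
      - pderiv (α, false, j, i) f • pderiv (α, true, i, j))

theorem hamiltonian_apply (f g : MvPolynomial (Idx N m) ℂ) : hamiltonian f g = pois f g := by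
  simp only [hamiltonian, pois, ← Derivation.coeFnAddMonoidHom_apply, map_sum, Finset.sum_apply]
  simp only [Derivation.coeFnAddMonoidHom_apply, Derivation.sub_apply,
    Derivation.smul_apply, smul_eq_mul, mul_comm (pderiv (_, false, _, _) f)]

theorem hamiltonian_Qm (f : MvPolynomial (Idx N m) ℂ) (u : Fin N) (c d : Fin m) :
    hamiltonian f (Qm N m u c d) = pderiv (u, true, d, c) f := by
  simp [hamiltonian_apply, pois, Qm, pderiv_X, Pi.single_apply, ite_and]

theorem hamiltonian_Pm (f : MvPolynomial (Idx N m) ℂ) (v : Fin N) (c d : Fin m) :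
    hamiltonian f (Pm N m v c d) = -pderiv (v, false, d, c) f := by
  simp [hamiltonian_apply, pois, Pm, pderiv_X, Pi.single_apply, ite_and]

/-- The matrix `A_S = ∑ u v, S u v • Q_u P_v` attached to a scalar matrix `S`; it puts all the
Takiff matrices, which are the `A_S` for powers `S` of the shift, into one family. -/
noncomputable def momentMatrix (m : ℕ) (S : Matrix (Fin N) (Fin N) ℂ) :
    Matrix (Fin m) (Fin m) (MvPolynomial (Idx N m) ℂ) :=
  ∑ u, ∑ v, S u v • (Qm N m u * Pm N m v)

theorem entrywise_momentMatrix
    (D : Derivation ℂ (MvPolynomial (Idx N m) ℂ) (MvPolynomial (Idx N m) ℂ))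
    (S : Matrix (Fin N) (Fin N) ℂ) :
    entrywise D (momentMatrix m S) =
      ∑ u, ∑ v, S u v • (entrywise D (Qm N m u) * Pm N m v)
        + ∑ u, ∑ v, S u v • (Qm N m u * entrywise D (Pm N m v)) := by
  simp only [momentMatrix, map_sum, map_smul, entrywise_mul, smul_add, sum_add_distrib]

theorem entrywise_pderiv_P_momentMatrix (S : Matrix (Fin N) (Fin N) ℂ) (u : Fin N) (d c : Fin m) :
    entrywise (pderiv (u, true, d, c)) (momentMatrix m S) =
      ∑ w, S w u • (Qm N m w * single d c 1) := by
  have hQ (w : Fin N) : entrywise (pderiv (u, true, d, c)) (Qm N m w) = 0 := by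
    ext a b
    simp [entrywise_apply, Qm, pderiv_X]
  have hP (v : Fin N) : entrywise (pderiv (u, true, d, c)) (Pm N m v) =
      if v = u then single d c 1 else 0 := by
    ext a b : 1
    obtain rfl | h := eq_or_ne u v <;>
      simp [entrywise_apply, Pm, pderiv_X, Pi.single_apply, single_apply, *, eq_comm]
  simp [entrywise_momentMatrix, hQ, hP]

theorem entrywise_pderiv_Q_momentMatrix (S : Matrix (Fin N) (Fin N) ℂ) (v : Fin N) (d c : Fin m) :
    entrywise (pderiv (v, false, d, c)) (momentMatrix m S) =
      ∑ w, S v w • (single d c 1 * Pm N m w) := by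
  have hQ (u : Fin N) : entrywise (pderiv (v, false, d, c)) (Qm N m u) =
      if u = v then single d c 1 else 0 := by
    ext a b : 1
    obtain rfl | h := eq_or_ne v u <;>
      simp [entrywise_apply, Qm, pderiv_X, Pi.single_apply, single_apply, *, eq_comm]
  have hP (w : Fin N) : entrywise (pderiv (v, false, d, c)) (Pm N m w) = 0 := by
    ext a b
    simp [entrywise_apply, Pm, pderiv_X]
  simp [entrywise_momentMatrix, hQ, hP]

theorem entrywise_hamiltonian_momentMatrix_Qm (S : Matrix (Fin N) (Fin N) ℂ) (a b : Fin m)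
    (u : Fin N) :
    entrywise (hamiltonian (momentMatrix m S a b)) (Qm N m u) =
      single b a 1 * ∑ w, S w u • Qm N m w := by
  ext c d : 1
  rw [entrywise_apply, hamiltonian_Qm, ← entrywise_apply, entrywise_pderiv_P_momentMatrix]
  simp only [← smul_mul_assoc, ← sum_mul, mul_single_one_apply_eq_single_one_mul_apply]

theorem entrywise_hamiltonian_momentMatrix_Pm (S : Matrix (Fin N) (Fin N) ℂ) (a b : Fin m)
    (v : Fin N) :
    entrywise (hamiltonian (momentMatrix m S a b)) (Pm N m v) =
      -((∑ w, S v w • Pm N m w) * single b a 1) := by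
  ext c d : 1
  rw [entrywise_apply, hamiltonian_Pm, ← entrywise_apply, entrywise_pderiv_Q_momentMatrix]
  simp only [← mul_smul_comm, ← mul_sum, Matrix.neg_apply,
    mul_single_one_apply_eq_single_one_mul_apply]

theorem momentMatrix_mul_eq_left (S T : Matrix (Fin N) (Fin N) ℂ) :
    momentMatrix m (S * T) = ∑ u, ∑ v, T u v • ((∑ w, S w u • Qm N m w) * Pm N m v) := by
  simp only [momentMatrix, Matrix.mul_apply, sum_mul, sum_smul, smul_sum, smul_mul_assoc,
    smul_smul, mul_comm (T _ _)]
  rw [sum_comm, sum_comm_cycle]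

theorem momentMatrix_mul_eq_right (S T : Matrix (Fin N) (Fin N) ℂ) :
    momentMatrix m (S * T) = ∑ u, ∑ v, S u v • (Qm N m u * ∑ w, T v w • Pm N m w) := by
  simp only [momentMatrix, Matrix.mul_apply, mul_sum, sum_smul, smul_sum, mul_smul_comm,
    smul_smul]
  exact sum_congr rfl fun u _ => sum_comm

theorem entrywise_hamiltonian_momentMatrix (S T : Matrix (Fin N) (Fin N) ℂ) (a b : Fin m) :
    entrywise (hamiltonian (momentMatrix m S a b)) (momentMatrix m T) =
      single b a 1 * momentMatrix m (S * T) - momentMatrix m (T * S) * single b a 1 := by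
  rw [entrywise_momentMatrix, momentMatrix_mul_eq_left S T, momentMatrix_mul_eq_right T S]
  simp only [entrywise_hamiltonian_momentMatrix_Qm, entrywise_hamiltonian_momentMatrix_Pm, mul_neg,
    smul_neg, sum_neg_distrib, ← sub_eq_add_neg, mul_sum, sum_mul, mul_smul_comm, smul_mul_assoc,
    mul_assoc]

end CanonicalBracket

section Takiff

/-- The `k`-th power of the nilpotent `N × N` shift, given by its entries: ones on the `k`-th
superdiagonal. These matrices represent the powers of `ε` in `K[ε]/(ε ^ N)`. -/
def shiftMatrix (K : Type*) [Zero K] [One K] (N k : ℕ) : Matrix (Fin N) (Fin N) K :=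
  of fun u v => if (v : ℕ) = u + k then 1 else 0

theorem shiftMatrix_mul (K : Type*) [NonAssocSemiring K] (N i j : ℕ) :
    shiftMatrix K N i * shiftMatrix K N j = shiftMatrix K N (i + j) := by
  ext u v
  simp only [Matrix.mul_apply, shiftMatrix, of_apply, ite_mul, one_mul, zero_mul]
  by_cases hu : u + i < N
  · rw [sum_eq_single ⟨u + i, hu⟩ (fun w _ hw => if_neg fun h => hw (Fin.ext h)) (by simp),
      if_pos rfl, add_assoc]
  · rw [sum_eq_zero fun w _ => if_neg (by omega), if_neg (by omega)]

variable (m r : ℕ)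

theorem Amat_eq_momentMatrix (k : ℕ) : Amat m r k = momentMatrix m (shiftMatrix ℂ (r + 1) k) := by
  simp only [Amat, momentMatrix, shiftMatrix, of_apply, ite_smul, one_smul, zero_smul]

theorem Amat_eq_zero {k : ℕ} (hk : r < k) : Amat m r k = 0 :=
  sum_eq_zero fun u _ => sum_eq_zero fun v _ => if_neg (by omega)

theorem entrywise_hamiltonian_Amat (i j : ℕ) (a b : Fin m) :
    entrywise (hamiltonian (Amat m r i a b)) (Amat m r j) =
      ⁅single b a (1 : MvPolynomial (Idx (r + 1) m) ℂ), Amat m r (i + j)⁆ := by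
  simp only [Amat_eq_momentMatrix, entrywise_hamiltonian_momentMatrix, shiftMatrix_mul,
    Ring.lie_def, add_comm j i]

theorem Icas_eq_sum_antidiagonal (t : ℕ) :
    Icas m r (t + 1) = ∑ p ∈ antidiagonal (r + t), (Amat m r p.1 * Amat m r p.2).trace := by
  rw [Icas, ← sum_product', ← sum_filter]
  refine sum_subset (fun p hp => ?_) (fun p hp hp' => ?_)
  · simp only [mem_filter, HasAntidiagonal.mem_antidiagonal] at hp ⊢
    omega
  · simp only [mem_filter, mem_product, Finset.mem_range,
      HasAntidiagonal.mem_antidiagonal] at hp hp'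
    have hlarge : r < p.1 ∨ r < p.2 := by omega
    rcases hlarge with h | h <;> simp [Amat_eq_zero m r h]

theorem statement3_general (s : ℕ) (hs : 1 ≤ s) (i : ℕ) (a b : Fin m) :
    pois (Amat m r i a b) (Icas m r s) = 0 := by
  obtain ⟨t, rfl⟩ := Nat.exists_eq_add_of_le' hs
  rw [← hamiltonian_apply, Icas_eq_sum_antidiagonal]
  exact map_sum_antidiagonal_trace_mul_eq_zero _ (fun k hk => Amat_eq_zero m r (by omega)) _
    fun j => entrywise_hamiltonian_Amat m r i j a b

end Takiff

/-- for `1 ≤ s ≤ r` the spectral invariant `I_s` is a Casimir: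
`{(A_i)_{ab}, I_s} = 0` for all `0 ≤ i ≤ r` and all matrix indices `a, b`. -/
theorem statement3 (m r : ℕ) (hm : 1 ≤ m) (s : ℕ) (hs1 : 1 ≤ s) (hsr : s ≤ r)
    (i : ℕ) (hi : i ≤ r) (a b : Fin m) :
    pois ((Amat m r i) a b) (Icas m r s) = 0 :=
  statement3_general m r s hs1 i a b
end

section
/- Let g and L be Lie algebras over ℂ, let r ≥ 1, and let k, l ≥ 0 with k + l ≤ r. Let (C_j)_{j ≥ −r}, (V_i)_{i ≥ 0}, (W_i)_{i ≥ 0}, (U_i)_{i ≥ 0} be families of ℂ-linear maps g → L, all but finitely many zero. For ε ≠ 0 set C(ε) := Σ_{j ≥ −r} ε^j C_j, V(ε) := −Σ_{i=1}^{r−k} ε^{−i} C_{−k−i} + Σ_{i ≥ 0} ε^i V_i, W(ε) := −Σ_{i=1}^{r−l} ε^{−i} C_{−l−i} + Σ_{i ≥ 0} ε^i W_i, and U(ε) := −Σ_{i=1}^{r−k−l} ε^{−i} C_{−k−l−i} + Σ_{i ≥ 0} ε^i U_i. Assume that for every ε ∈ ℂ∖{0} and all X, Y ∈ g: ⁅C(ε)(X),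 C(ε)(Y)⁆ = −C(ε)(⁅X,Y⁆), ⁅V(ε)(X), W(ε)(Y)⁆ = −U(ε)(⁅X,Y⁆), ⁅V(ε)(X), C(ε)(Y)⁆ = 0, and ⁅C(ε)(X), W(ε)(Y)⁆ = 0. Then for all X, Y ∈ g: ⁅(V_0 + C_{−k})(X), (W_0 + C_{−l})(Y)⁆ = −(U_0 + C_{−k−l})(⁅X,Y⁆). (This is the inductive Poisson step showing that the confluence of a simple pole with a pole of Poincaré rank r−1 produces the graded Takiff Lie–Poisson relations of degree r.) -/
/-!
The inductive Poisson step of the confluence: colliding a simple pole (residue `C(ε)`)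
with a pole of Poincaré rank `r−1` produces the graded Takiff Lie–Poisson relations of
degree `r`.

The residue `C(ε)` is encoded by a finitely supported family `Cm : ℤ → (g →ₗ[ℂ] L)`
(vanishing below `−r`), with `Cser Cm ε = Σᶠ_{j∈ℤ} ε^j • Cm j`.  A coefficient
`B^{[k]}(ε) = −Σ_{i=1}^{r−k} ε^{−i} C_{−k−i} + Σ_{i≥0} ε^i V_i` is encoded by the
finitely supported family `Vm : ℕ → (g →ₗ[ℂ] L)` of its regular Taylor coefficients,
via `Bser Cm Vm r k ε`.
-/

noncomputable section

/-- `Cser Cm ε X = Σᶠ_{j∈ℤ} ε^j • (Cm j)(X)`. -/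
def Cser {g L : Type*} [LieRing g] [LieAlgebra ℂ g] [LieRing L] [LieAlgebra ℂ L]
    (Cm : ℤ → (g →ₗ[ℂ] L)) (ε : ℂ) (X : g) : L :=
  ∑ᶠ j : ℤ, ε ^ j • Cm j X

/-- `Bser Cm Vm r k ε X = −Σ_{i=1}^{r−k} ε^{−i} • C_{−k−i}(X) + Σᶠ_{i∈ℕ} ε^i • (Vm i)(X)`. -/
def Bser {g L : Type*} [LieRing g] [LieAlgebra ℂ g] [LieRing L] [LieAlgebra ℂ L]
    (Cm : ℤ → (g →ₗ[ℂ] L)) (Vm : ℕ → (g →ₗ[ℂ] L)) (r k : ℕ) (ε : ℂ) (X : g) : L :=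
  -(∑ i ∈ Finset.Icc 1 (r - k), (ε ^ (-(i : ℤ))) • Cm (-(k : ℤ) - (i : ℤ)) X)
    + ∑ᶠ i : ℕ, ε ^ i • Vm i X

end

/-!
Put `S(ε) = V(ε) + ε^k C(ε)`, `T(ε) = W(ε) + ε^l C(ε)` and `R(ε) = U(ε) + ε^(k+l) C(ε)`. The
singular parts of `V`, `W`, `U` are exactly those that cancel the poles of the multiples of `C`, so
`S`, `T`, `R` are polynomial in `ε`, with constant terms `V₀ + C_{−k}`, `W₀ + C_{−l}`,
`U₀ + C_{−k−l}`. As the mixed brackets vanish, `⁅S(ε) X, T(ε) Y⁆ = −R(ε) ⁅X, Y⁆` for `ε ≠ 0`. Both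
sides are polynomial, so the relation persists at `ε = 0`.
-/

section PolynomialMaps

open Polynomial

/-- The functions `K → M` that are polynomial in the variable `ε : K` with coefficients in the
module `M`, as the span of the monomials `ε ↦ ε ^ n • m`. -/
def polynomialMaps (K M : Type*) [CommRing K] [AddCommGroup M] [Module K M] :
    Submodule K (K → M) :=
  Submodule.span K {F | ∃ (n : ℕ) (m : M), F = fun ε => ε ^ n • m}

section CommRing

variable {K M N P : Type*} [CommRing K] [AddCommGroup M] [Module K M] [AddCommGroup N] [Module K N]
  [AddCommGroup P] [Module K P]

theorem pow_smul_mem_polynomialMaps (n : ℕ) (m : M) :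
    (fun ε : K => ε ^ n • m) ∈ polynomialMaps K M :=
  Submodule.subset_span ⟨n, m, rfl⟩

theorem finsum_pow_smul_mem_polynomialMaps {a : ℕ → M} (ha : a.support.Finite) :
    (fun ε : K => ∑ᶠ n, ε ^ n • a n) ∈ polynomialMaps K M := by
  have finsum_eq_sum : (fun ε : K => ∑ᶠ n, ε ^ n • a n)
      = ∑ n ∈ ha.toFinset, fun ε : K => ε ^ n • a n := by
    ext ε
    rw [Finset.sum_apply]
    refine finsum_eq_sum_of_support_subset _ ?_
    rw [ha.coe_toFinset]
    exact Function.support_smul_subset_right _ _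
  rw [finsum_eq_sum]
  exact Submodule.sum_mem _ fun n _ => pow_smul_mem_polynomialMaps n (a n)

theorem bilin_mem_polynomialMaps (B : M →ₗ[K] N →ₗ[K] P) {F : K → M} {G : K → N}
    (hF : F ∈ polynomialMaps K M) (hG : G ∈ polynomialMaps K N) :
    (fun ε => B (F ε) (G ε)) ∈ polynomialMaps K P := by
  let pointwise : (K → M) →ₗ[K] (K → N) →ₗ[K] (K → P) :=
    LinearMap.mk₂ K (fun F G ε => B (F ε) (G ε))
      (fun _ _ _ => by ext; simp) (fun _ _ _ => by ext; simp)
      (fun _ _ _ => by ext; simp) (fun _ _ _ => by ext; simp)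
  suffices Submodule.map₂ pointwise (polynomialMaps K M) (polynomialMaps K N)
      ≤ polynomialMaps K P from this (Submodule.apply_mem_map₂ pointwise hF hG)
  rw [polynomialMaps, polynomialMaps, Submodule.map₂_span_span, Submodule.span_le]
  rintro _ ⟨_, ⟨i, m, rfl⟩, _, ⟨j, n, rfl⟩, rfl⟩
  simpa only [pointwise, LinearMap.mk₂_apply, map_smul, LinearMap.smul_apply, smul_smul,
    ← pow_add, SetLike.mem_coe] using pow_smul_mem_polynomialMaps (j + i) (B m n)

theorem exists_polynomial_eval_eq_dual_apply {F : K → M} (hF : F ∈ polynomialMaps K M)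
    (φ : Module.Dual K M) : ∃ p : K[X], ∀ ε, p.eval ε = φ (F ε) := by
  induction hF using Submodule.span_induction with
  | mem F hF =>
    obtain ⟨n, m, rfl⟩ := hF
    exact ⟨C (φ m) * X ^ n, fun ε => by simp [mul_comm (φ m)]⟩
  | zero => exact ⟨0, fun ε => by simp⟩
  | add F G _ _ hF hG =>
    obtain ⟨p, hp⟩ := hF
    obtain ⟨q, hq⟩ := hG
    exact ⟨p + q, fun ε => by simp [hp, hq]⟩
  | smul t F _ hF =>
    obtain ⟨p, hp⟩ := hF
    exact ⟨C t * p, fun ε => by simp [hp]⟩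

theorem finsum_zero_pow_smul (a : ℕ → M) : ∑ᶠ n, (0 : K) ^ n • a n = a 0 := by
  rw [finsum_eq_single _ 0 fun n hn => by rw [zero_pow hn, zero_smul], pow_zero, one_smul]

end CommRing

theorem eq_of_infinite_eqOn_of_mem_polynomialMaps {K M : Type*} [Field K] [AddCommGroup M]
    [Module K M] {F G : K → M} (hF : F ∈ polynomialMaps K M) (hG : G ∈ polynomialMaps K M)
    {S : Set K} (hS : S.Infinite) (hFG : Set.EqOn F G S) : F = G := by
  ext ε
  rw [← sub_eq_zero, ← Module.forall_dual_apply_eq_zero_iff K]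
  intro φ
  obtain ⟨p, hp⟩ := exists_polynomial_eval_eq_dual_apply hF φ
  obtain ⟨q, hq⟩ := exists_polynomial_eval_eq_dual_apply hG φ
  have hpq : p = q := eq_of_infinite_eval_eq p q <| hS.mono fun x hx => by
    rw [Set.mem_ofPred_eq, hp, hq, hFG hx]
  rw [map_sub, ← hp, ← hq, hpq, sub_self]

end PolynomialMaps

section LaurentSums

theorem finsum_int_eq_sum_add_finsum_nat {M : Type*} [AddCommMonoid M] {f : ℤ → M}
    (hf : f.support.Finite) (m : ℕ) (hlow : ∀ j < -(m : ℤ), f j = 0) :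
    ∑ᶠ j, f j = ∑ i ∈ Finset.Icc 1 m, f (-(i : ℤ)) + ∑ᶠ n : ℕ, f n := by
  let poles : Set ℤ := (fun i : ℕ => -(i : ℤ)) '' Finset.Icc 1 m
  have sum_poles : ∑ᶠ j ∈ poles, f j = ∑ i ∈ Finset.Icc 1 m, f (-(i : ℤ)) := by
    rw [finsum_mem_image (by intro i _ j _ h; simpa using h), finsum_mem_coe_finset]
  have sum_nat : ∑ᶠ j ∈ Set.range ((↑) : ℕ → ℤ), f j = ∑ᶠ n : ℕ, f n :=
    finsum_mem_range Nat.cast_injective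
  have poles_disjoint : Disjoint poles (Set.range ((↑) : ℕ → ℤ)) := by
    rw [Set.disjoint_left]
    rintro _ ⟨i, hi, rfl⟩ ⟨n, hn⟩
    have := (Finset.mem_Icc.mp hi).1
    dsimp only at hn
    omega
  have support_subset : f.support ⊆ poles ∪ Set.range ((↑) : ℕ → ℤ) := by
    intro j hj
    have hmj : -(m : ℤ) ≤ j := not_lt.mp fun h => hj (hlow j h)
    rcases le_or_gt 0 j with hj0 | hj0
    · exact Or.inr ⟨j.toNat, by omega⟩
    · exact Or.inl ⟨j.natAbs, by rw [Finset.mem_coe, Finset.mem_Icc]; omega, by dsimp only; omega⟩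
  calc ∑ᶠ j, f j = ∑ᶠ j ∈ poles ∪ Set.range ((↑) : ℕ → ℤ), f j := by
        rw [← finsum_mem_univ]
        refine finsum_mem_inter_support_eq _ _ _ ?_
        rw [Set.univ_inter, Set.inter_eq_right.mpr support_subset]
    _ = _ := by
        rw [finsum_mem_union' poles_disjoint (hf.inter_of_right _) (hf.inter_of_right _),
          sum_poles, sum_nat]

variable {K M : Type*} [Field K] [AddCommGroup M] [Module K M]

/-- The value at `ε` of the Laurent series with coefficients `c`: the function `Cser` over an
arbitrary field, for coefficients in an arbitrary vector space. It is meaningful for finitely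
supported `c` and `ε ≠ 0`. -/
noncomputable def laurentSum (c : ℤ → M) (ε : K) : M :=
  ∑ᶠ j : ℤ, ε ^ j • c j

/-- The value at `ε` of the Laurent series with regular part `v` and polar part
`-∑ i, ε⁻ⁱ c_{-k-i}`, `1 ≤ i ≤ r - k`: the function `Bser` over an arbitrary field, for coefficients
in an arbitrary vector space. The polar part is empty when `r ≤ k`. -/
noncomputable def confluentSum (c : ℤ → M) (v : ℕ → M) (r k : ℕ) (ε : K) : M :=
  -(∑ i ∈ Finset.Icc 1 (r - k), ε ^ (-(i : ℤ)) • c (-(k : ℤ) - i)) + ∑ᶠ i : ℕ, ε ^ i • v i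

theorem pow_smul_laurentSum (c : ℤ → M) (k : ℕ) {ε : K} (hε : ε ≠ 0) :
    ε ^ k • laurentSum c ε = laurentSum (fun j => c (j - k)) ε := by
  rw [laurentSum, laurentSum, smul_finsum, ← finsum_comp_equiv (Equiv.subRight (k : ℤ))]
  refine finsum_congr fun j => ?_
  rw [Equiv.subRight_apply, smul_smul, ← zpow_natCast, ← zpow_add₀ hε, add_sub_cancel]

theorem confluentSum_add_pow_smul_laurentSum {c : ℤ → M} {v : ℕ → M} (hc : c.support.Finite)
    (hv : v.support.Finite) {r : ℕ} (hlow : ∀ j < -(r : ℤ), c j = 0) (k : ℕ) {ε : K} (hε : ε ≠ 0) :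
    confluentSum c v r k ε + ε ^ k • laurentSum c ε
      = ∑ᶠ n : ℕ, ε ^ n • (v n + c ((n : ℤ) - k)) := by
  have hshift : (fun j : ℤ => c (j - k)).support.Finite :=
    hc.preimage sub_left_injective.injOn
  have split_laurentSum : laurentSum (fun j => c (j - k)) ε
      = ∑ i ∈ Finset.Icc 1 (r - k), ε ^ (-(i : ℤ)) • c (-(i : ℤ) - k)
        + ∑ᶠ n : ℕ, ε ^ n • c ((n : ℤ) - k) := by
    rw [laurentSum, finsum_int_eq_sum_add_finsum_nat (f := fun j : ℤ => ε ^ j • c (j - k))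
      (hshift.subset (Function.support_smul_subset_right _ _)) (r - k)
      fun j hj => by rw [hlow (j - k) (by omega), smul_zero]]
    simp only [zpow_natCast]
  have split_regular : ∑ᶠ n : ℕ, ε ^ n • (v n + c ((n : ℤ) - k))
      = ∑ᶠ n : ℕ, ε ^ n • v n + ∑ᶠ n : ℕ, ε ^ n • c ((n : ℤ) - k) := by
    simp only [smul_add]
    exact finsum_add_distrib (hv.subset (Function.support_smul_subset_right _ _))
      ((hshift.preimage Nat.cast_injective.injOn).subset (Function.support_smul_subset_right _ _))
  rw [pow_smul_laurentSum c k hε, split_laurentSum, split_regular, confluentSum]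
  simp only [sub_eq_add_neg, add_comm (-(k : ℤ))]
  abel

theorem support_add_comp_natCast_sub_finite {c : ℤ → M} {v : ℕ → M} (hc : c.support.Finite)
    (hv : v.support.Finite) (k : ℕ) : (fun n : ℕ => v n + c ((n : ℤ) - k)).support.Finite :=
  (hv.union (hc.preimage (sub_left_injective.comp Nat.cast_injective).injOn)).subset
    (Function.support_add _ _)

end LaurentSums

theorem bilin_add_smul_add_smul_eq_neg {K M N P : Type*} [CommRing K] [AddCommGroup M]
    [Module K M] [AddCommGroup N] [Module K N] [AddCommGroup P] [Module K P]
    (B : M →ₗ[K] N →ₗ[K] P) {x a : M} {y b : N} {z c : P} (s t : K) (hab : B a b = -c)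
    (hxy : B x y = -z) (hxb : B x b = 0) (hay : B a y = 0) :
    B (x + s • a) (y + t • b) = -(z + (s * t) • c) := by
  simp only [map_add, map_smul, LinearMap.add_apply, LinearMap.smul_apply, hab, hxy, hxb, hay]
  module

theorem statement11_general {K M N P : Type*} [Field K] [AddCommGroup M] [Module K M]
    [AddCommGroup N] [Module K N] [AddCommGroup P] [Module K P] (B : M →ₗ[K] N →ₗ[K] P)
    (r k l : ℕ) {a : ℤ → M} {b : ℤ → N} {c : ℤ → P} {v : ℕ → M} {w : ℕ → N} {u : ℕ → P}
    (ha : a.support.Finite) (hb : b.support.Finite) (hc : c.support.Finite)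
    (hv : v.support.Finite) (hw : w.support.Finite) (hu : u.support.Finite)
    (ha_low : ∀ j < -(r : ℤ), a j = 0) (hb_low : ∀ j < -(r : ℤ), b j = 0)
    (hc_low : ∀ j < -(r : ℤ), c j = 0)
    {S : Set K} (hS : S.Infinite) (hS₀ : ∀ ε ∈ S, ε ≠ 0)
    (hab : ∀ ε ∈ S, B (laurentSum a ε) (laurentSum b ε) = -laurentSum c ε)
    (hvw : ∀ ε ∈ S,
      B (confluentSum a v r k ε) (confluentSum b w r l ε) = -confluentSum c u r (k + l) ε)
    (hvb : ∀ ε ∈ S, B (confluentSum a v r k ε) (laurentSum b ε) = 0)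
    (haw : ∀ ε ∈ S, B (laurentSum a ε) (confluentSum b w r l ε) = 0) :
    B (v 0 + a (-(k : ℤ))) (w 0 + b (-(l : ℤ))) = -(u 0 + c (-(k : ℤ) - l)) := by
  have eqOn_S : Set.EqOn
      (fun ε => B (∑ᶠ n : ℕ, ε ^ n • (v n + a ((n : ℤ) - k)))
        (∑ᶠ n : ℕ, ε ^ n • (w n + b ((n : ℤ) - l))))
      (-fun ε => ∑ᶠ n : ℕ, ε ^ n • (u n + c ((n : ℤ) - (k + l : ℕ)))) S := by
    intro ε hε
    dsimp only [Pi.neg_apply]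
    rw [← confluentSum_add_pow_smul_laurentSum ha hv ha_low k (hS₀ ε hε),
      ← confluentSum_add_pow_smul_laurentSum hb hw hb_low l (hS₀ ε hε),
      ← confluentSum_add_pow_smul_laurentSum hc hu hc_low (k + l) (hS₀ ε hε), pow_add]
    exact bilin_add_smul_add_smul_eq_neg B _ _ (hab ε hε) (hvw ε hε) (hvb ε hε) (haw ε hε)
  have eq_everywhere := eq_of_infinite_eqOn_of_mem_polynomialMaps
    (bilin_mem_polynomialMaps B
      (finsum_pow_smul_mem_polynomialMaps (support_add_comp_natCast_sub_finite ha hv k))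
      (finsum_pow_smul_mem_polynomialMaps (support_add_comp_natCast_sub_finite hb hw l)))
    (Submodule.neg_mem _
      (finsum_pow_smul_mem_polynomialMaps (support_add_comp_natCast_sub_finite hc hu (k + l))))
    hS eqOn_S
  simpa only [Pi.neg_apply, finsum_zero_pow_smul, Nat.cast_zero, zero_sub, Nat.cast_add,
    neg_add, ← sub_eq_add_neg] using congrFun eq_everywhere 0

theorem support_linearMap_apply_finite {ι K M N : Type*} [Semiring K] [AddCommMonoid M] [Module K M]
    [AddCommMonoid N] [Module K N] {f : ι → M →ₗ[K] N} (hf : f.support.Finite) (x : M) :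
    (fun i => f i x).support.Finite :=
  hf.subset fun i hi hfi => hi (by simp only [hfi, LinearMap.zero_apply])

/-- let `k + l ≤ r`, let `C(ε)`, `V(ε) = B^{[k]}(ε)`, `W(ε) = B^{[l]}(ε)`,
`U(ε) = B^{[k+l]}(ε)` be as above, and assume for all `ε ≠ 0` and `X, Y ∈ g`:
`⁅C(ε)X, C(ε)Y⁆ = −C(ε)⁅X,Y⁆`, `⁅V(ε)X, W(ε)Y⁆ = −U(ε)⁅X,Y⁆`, `⁅V(ε)X, C(ε)Y⁆ = 0`,
`⁅C(ε)X, W(ε)Y⁆ = 0`.  Then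
`⁅(V₀ + C_{−k})X, (W₀ + C_{−l})Y⁆ = −(U₀ + C_{−k−l})⁅X,Y⁆` for all `X, Y`. -/
theorem statement11 {g L : Type*} [LieRing g] [LieAlgebra ℂ g] [LieRing L] [LieAlgebra ℂ L]
    (r k l : ℕ) (hr : 1 ≤ r) (hkl : k + l ≤ r)
    (Cm : ℤ → (g →ₗ[ℂ] L)) (Vm Wm Um : ℕ → (g →ₗ[ℂ] L))
    (hCmfin : (Function.support Cm).Finite)
    (hVmfin : (Function.support Vm).Finite)
    (hWmfin : (Function.support Wm).Finite)
    (hUmfin : (Function.support Um).Finite)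
    (hlow : ∀ j : ℤ, j < -(r : ℤ) → Cm j = 0)
    (hCC : ∀ ε : ℂ, ε ≠ 0 → ∀ X Y : g,
      ⁅Cser Cm ε X, Cser Cm ε Y⁆ = - Cser Cm ε ⁅X, Y⁆)
    (hVW : ∀ ε : ℂ, ε ≠ 0 → ∀ X Y : g,
      ⁅Bser Cm Vm r k ε X, Bser Cm Wm r l ε Y⁆ = - Bser Cm Um r (k + l) ε ⁅X, Y⁆)
    (hVC : ∀ ε : ℂ, ε ≠ 0 → ∀ X Y : g,
      ⁅Bser Cm Vm r k ε X, Cser Cm ε Y⁆ = 0)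
    (hCW : ∀ ε : ℂ, ε ≠ 0 → ∀ X Y : g,
      ⁅Cser Cm ε X, Bser Cm Wm r l ε Y⁆ = 0) :
    ∀ X Y : g,
      ⁅Vm 0 X + Cm (-(k : ℤ)) X, Wm 0 Y + Cm (-(l : ℤ)) Y⁆
        = -(Um 0 ⁅X, Y⁆ + Cm (-(k : ℤ) - (l : ℤ)) ⁅X, Y⁆) := by
  intro X Y
  have apply_low (Z : g) : ∀ j < -(r : ℤ), Cm j Z = 0 := fun j hj => by
    rw [hlow j hj, LinearMap.zero_apply]
  exact statement11_general (LieModule.toEnd ℂ L L : L →ₗ[ℂ] Module.End ℂ L) r k l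
    (support_linearMap_apply_finite hCmfin X) (support_linearMap_apply_finite hCmfin Y)
    (support_linearMap_apply_finite hCmfin ⁅X, Y⁆) (support_linearMap_apply_finite hVmfin X)
    (support_linearMap_apply_finite hWmfin Y) (support_linearMap_apply_finite hUmfin ⁅X, Y⁆)
    (apply_low X) (apply_low Y) (apply_low ⁅X, Y⁆)
    (Set.finite_singleton (0 : ℂ)).infinite_compl (fun _ hε => hε)
    (fun ε hε => hCC ε hε X Y) (fun ε hε => hVW ε hε X Y)
    (fun ε hε => hVC ε hε X Y) (fun ε hε => hCW ε hε X Y)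
end

section
/- Let m ≥ 1 and let (Q^0,P^0), (Q^1,P^1), (Q_0,P_0), (Q_1,P_1) be four pairs of m×m matrices of independent commuting indeterminates. Set A^0 := Q^0P^0, A^1 := Q^1P^1, A_0 := Q_0P_0 + Q_1P_1, A_1 := Q_0P_1, and for u ∈ ℂ∖{0,1} and t_1 ∈ ℂ∖{0} define H_u := Tr( A_0·(A^0/u + A^1/(u−1)) ) − t_1·Tr( A_1·(A^0/u^2 + A^1/(u−1)^2) ) and H_1 := Tr( A_1·(A^0/u + A^1/(u−1)) ) + Tr(A_0^2)/(2 t_1). Then: (i) with respect to the canonical Poisson bracket, {H_u, H_1} = 0 for every such u, t_1; (ii) holding the matrix indeterminates fixed, ∂H_u/∂t_1 = ∂H_1/∂u on (ℂ∖{0,1}) × (ℂ∖{0}). Hence H_u du + H_1 dt_1 is a closed one-form along the flows, so the isomonodromic τ-function of the system with simple poles at 0, 1 and a second-order pole at u is well defined. -/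
/-!
The confluent isomonodromic Hamiltonians for the connection
`A(λ) = A⁰/λ + A¹/(λ−1) + A₀/(λ−u) + t₁A₁/(λ−u)²` in lifted Darboux coordinates:
they Poisson-commute and their cross-derivatives in `(u, t₁)` agree, so
`H_u du + H_1 dt₁` defines the isomonodromic τ-function.
-/

open MvPolynomial

noncomputable section

/-- `A⁰ = Q⁰P⁰` (residue at `0`). -/
def A0s (m : ℕ) : Matrix (Fin m) (Fin m) (MvPolynomial (Idx 4 m) ℂ) := Qm 4 m 0 * Pm 4 m 0

/-- `A¹ = Q¹P¹` (residue at `1`). -/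
def A1s (m : ℕ) : Matrix (Fin m) (Fin m) (MvPolynomial (Idx 4 m) ℂ) := Qm 4 m 1 * Pm 4 m 1

/-- `A₀ = Q₀P₀ + Q₁P₁` (Takiff residue at `u`). -/
def Au0 (m : ℕ) : Matrix (Fin m) (Fin m) (MvPolynomial (Idx 4 m) ℂ) :=
  Qm 4 m 2 * Pm 4 m 2 + Qm 4 m 3 * Pm 4 m 3

/-- `A₁ = Q₀P₁` (Takiff leading coefficient at `u`). -/
def Au1 (m : ℕ) : Matrix (Fin m) (Fin m) (MvPolynomial (Idx 4 m) ℂ) := Qm 4 m 2 * Pm 4 m 3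

/-- `H_u = Tr(A₀(A⁰/u + A¹/(u−1))) − t₁·Tr(A₁(A⁰/u² + A¹/(u−1)²))`. -/
def Hu (m : ℕ) (u t₁ : ℂ) : MvPolynomial (Idx 4 m) ℂ :=
  (Au0 m * (u⁻¹ • A0s m + (u - 1)⁻¹ • A1s m)).trace
    - t₁ • (Au1 m * ((u ^ 2)⁻¹ • A0s m + ((u - 1) ^ 2)⁻¹ • A1s m)).trace

/-- `H_1 = Tr(A₁(A⁰/u + A¹/(u−1))) + Tr(A₀²)/(2t₁)`. -/
def H1 (m : ℕ) (u t₁ : ℂ) : MvPolynomial (Idx 4 m) ℂ :=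
  (Au1 m * (u⁻¹ • A0s m + (u - 1)⁻¹ • A1s m)).trace
    + (2 * t₁)⁻¹ • (Au0 m * Au0 m).trace

end

/-!
The entries of the products `E α β = Q_α P_β` satisfy the Poisson relations of a general linear Lie
algebra: contracting `{E α β, E γ δ}` with a matrix `C` in the first slot gives
`δ_{βγ} C E α δ - δ_{αδ} E γ β C`. Since `A⁰`, `A¹`, `A₀`, `A₁` are sums of such products, the
derivation `D = {H_1, ·}` takes Lax form: with `B = A⁰/u + A¹/(u-1)`,
`D A⁰ = ⁅A₁, A⁰⁆/u`, `D A¹ = ⁅A₁, A¹⁆/(u-1)`, `D A₀ = ⁅B, A₁⁆` and `D A₁ = ⁅A₀, A₁⁆/t₁`.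
With `K = A⁰/u² + A¹/(u-1)²` this yields `D B = ⁅A₁, K⁆`, and in the image under `D` of
`H_u = Tr(A₀B) - t₁ Tr(A₁K)` the terms `Tr(A₀⁅A₁, K⁆)` and `Tr(⁅A₀, A₁⁆K)` cancel by
invariance of the trace form, the others having the shape `Tr(X⁅X, Y⁆) = 0`.
Both cross-derivatives equal `-Tr(A₁K)`.
-/

section MatrixDerivations

variable {k R n M : Type*} [CommSemiring k] [CommSemiring R] [Algebra k R] [Fintype n]
  [AddCommMonoid M] [Module k M] [Module R M]

lemma derivation_sum_apply {ι : Type*} (s : Finset ι) (D : ι → Derivation k R M) (f : R) :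
    (∑ i ∈ s, D i) f = ∑ i ∈ s, D i f := by
  have := congrFun (map_sum Derivation.coeFnAddMonoidHom D s) f
  simpa only [Derivation.coeFnAddMonoidHom_apply, Finset.sum_apply] using this

lemma map_derivation_mul (D : Derivation k R R) (X Y : Matrix n n R) :
    (X * Y).map D = X.map D * Y + X * Y.map D := by
  ext i j
  simp only [Matrix.map_apply, Matrix.add_apply, Matrix.mul_apply, map_sum, Derivation.leibniz,
    smul_eq_mul, Finset.sum_add_distrib]
  rw [add_comm]
  simp only [mul_comm]

variable [IsScalarTower k R M]

/-- The pairing `Tr(C · d(X)) = ∑ C_{ji} d(X_{ij})` of a matrix `C` with the entrywise image of `X`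
under a derivation `d` with values in a module, as a linear function of `X`. -/
def tracePairing (d : Derivation k R M) (C : Matrix n n R) : Matrix n n R →ₗ[k] M where
  toFun X := ∑ i, ∑ j, C j i • d (X i j)
  map_add' X Y := by simp only [Matrix.add_apply, map_add, smul_add, Finset.sum_add_distrib]
  map_smul' c X := by
    simp only [Matrix.smul_apply, Derivation.map_smul, RingHom.id_apply, Finset.smul_sum,
      smul_comm c]

lemma tracePairing_apply (d : Derivation k R M) (C X : Matrix n n R) :
    tracePairing d C X = ∑ i, ∑ j, C j i • d (X i j) := rfl

lemma tracePairing_smul_left (d : Derivation k R M) (c : k) (C X : Matrix n n R) :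
    tracePairing d (c • C) X = c • tracePairing d C X := by
  simp only [tracePairing_apply, Matrix.smul_apply, smul_assoc, Finset.smul_sum]

lemma derivation_trace_mul (d : Derivation k R M) (X Y : Matrix n n R) :
    d (X * Y).trace = tracePairing d Y X + tracePairing d X Y := by
  simp only [tracePairing_apply, Matrix.trace, Matrix.diag_apply, Matrix.mul_apply, map_sum,
    Derivation.leibniz, Finset.sum_add_distrib]
  rw [add_comm, Finset.sum_comm (f := fun i j => X i j • d (Y j i))]

lemma tracePairing_eq_trace (D : Derivation k R R) (C X : Matrix n n R) :
    tracePairing D C X = (C * X.map D).trace := by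
  rw [tracePairing_apply, Finset.sum_comm]
  rfl

end MatrixDerivations

section TraceForm

variable {R n : Type*} [CommRing R] [Fintype n]

lemma trace_lie_mul_s16 (X Y Z : Matrix n n R) : (⁅X, Y⁆ * Z).trace = (X * ⁅Y, Z⁆).trace := by
  rw [Ring.lie_def, Ring.lie_def, sub_mul, mul_sub, Matrix.trace_sub, Matrix.trace_sub,
    Matrix.trace_mul_cycle Y X Z, Matrix.trace_mul_comm (Z * Y), mul_assoc]

lemma trace_mul_lie_self (X Y : Matrix n n R) : (X * ⁅X, Y⁆).trace = 0 := by
  rw [← trace_lie_mul_s16, Ring.lie_def, sub_self, zero_mul, Matrix.trace_zero]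

end TraceForm

section CanonicalBracket

variable {N m : ℕ}

/-- The Hamiltonian vector field `{f, ·}`, as a derivation in `f` with values in derivations. -/
noncomputable def hamiltonianField :
    Derivation ℂ (MvPolynomial (Idx N m) ℂ)
      (Derivation ℂ (MvPolynomial (Idx N m) ℂ) (MvPolynomial (Idx N m) ℂ)) :=
  ∑ α : Fin N, ∑ i : Fin m, ∑ j : Fin m,
    ((LinearMap.toSpanSingleton _ _ (pderiv (α, false, j, i))).compDer (pderiv (α, true, i, j))
      - (LinearMap.toSpanSingleton _ _ (pderiv (α, true, i, j))).compDer (pderiv (α, false, j, i)))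

lemma hamiltonianField_apply (f g : MvPolynomial (Idx N m) ℂ) :
    hamiltonianField f g = pois f g := by
  simp [hamiltonianField, pois, derivation_sum_apply, mul_comm]

lemma pois_antisymm (f g : MvPolynomial (Idx N m) ℂ) : pois f g = -pois g f := by
  simp only [pois, ← Finset.sum_neg_distrib, neg_sub]

lemma hamiltonianField_X_false (f : MvPolynomial (Idx N m) ℂ) (α : Fin N) (i j : Fin m) :
    hamiltonianField f (X (α, false, i, j)) = pderiv (α, true, j, i) f := by
  simp [hamiltonianField_apply, pois, pderiv_X, Pi.single_apply, ite_and]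

lemma hamiltonianField_X_true (f : MvPolynomial (Idx N m) ℂ) (α : Fin N) (i j : Fin m) :
    hamiltonianField f (X (α, true, i, j)) = -pderiv (α, false, j, i) f := by
  simp [hamiltonianField_apply, pois, pderiv_X, Pi.single_apply, ite_and]

lemma map_pderiv_false_Qm (α β : Fin N) (i j : Fin m) :
    (Qm N m α).map (pderiv (β, false, i, j)) = if α = β then Matrix.single i j 1 else 0 := by
  ext a b
  by_cases hαβ : α = β <;>
    simp [Qm, pderiv_X, Pi.single_apply, Matrix.single_apply, hαβ, eq_comm]

lemma map_pderiv_true_Qm (α β : Fin N) (i j : Fin m) :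
    (Qm N m α).map (pderiv (β, true, i, j)) = 0 := by
  ext a b
  simp [Qm, pderiv_X]

lemma map_pderiv_true_Pm (α β : Fin N) (i j : Fin m) :
    (Pm N m α).map (pderiv (β, true, i, j)) = if α = β then Matrix.single i j 1 else 0 := by
  ext a b
  by_cases hαβ : α = β <;>
    simp [Pm, pderiv_X, Pi.single_apply, Matrix.single_apply, hαβ, eq_comm]

lemma map_pderiv_false_Pm (α β : Fin N) (i j : Fin m) :
    (Pm N m α).map (pderiv (β, false, i, j)) = 0 := by
  ext a b
  simp [Pm, pderiv_X]

lemma tracePairing_hamiltonianField_apply (C Y : Matrix (Fin m) (Fin m) (MvPolynomial (Idx N m) ℂ))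
    (g : MvPolynomial (Idx N m) ℂ) :
    tracePairing hamiltonianField C Y g = ∑ i, ∑ j, C j i * hamiltonianField (Y i j) g := by
  simp only [tracePairing_apply, derivation_sum_apply, Derivation.smul_apply, smul_eq_mul]

lemma map_tracePairing_hamiltonianField_Qm
    (C : Matrix (Fin m) (Fin m) (MvPolynomial (Idx N m) ℂ)) (α β γ : Fin N) :
    (Qm N m γ).map (tracePairing hamiltonianField C (Qm N m α * Pm N m β))
      = if β = γ then C * Qm N m α else 0 := by
  refine Matrix.ext fun a b => ?_
  calc tracePairing hamiltonianField C (Qm N m α * Pm N m β) (X (γ, false, a, b))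
      = tracePairing (pderiv (γ, true, b, a)) C (Qm N m α * Pm N m β) := by
        rw [tracePairing_hamiltonianField_apply, tracePairing_apply]
        simp only [hamiltonianField_X_false, smul_eq_mul]
    _ = (C * (Qm N m α * if β = γ then Matrix.single b a 1 else 0)).trace := by
        rw [tracePairing_eq_trace, map_derivation_mul, map_pderiv_true_Qm, map_pderiv_true_Pm,
          zero_mul, zero_add]
    _ = (if β = γ then C * Qm N m α else 0 : Matrix (Fin m) (Fin m) _) a b := by
        split_ifs
        · simp [← mul_assoc, Matrix.trace_mul_single]
        · simp

lemma map_tracePairing_hamiltonianField_Pm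
    (C : Matrix (Fin m) (Fin m) (MvPolynomial (Idx N m) ℂ)) (α β γ : Fin N) :
    (Pm N m γ).map (tracePairing hamiltonianField C (Qm N m α * Pm N m β))
      = if α = γ then -(Pm N m β * C) else 0 := by
  refine Matrix.ext fun a b => ?_
  calc tracePairing hamiltonianField C (Qm N m α * Pm N m β) (X (γ, true, a, b))
      = -tracePairing (pderiv (γ, false, b, a)) C (Qm N m α * Pm N m β) := by
        rw [tracePairing_hamiltonianField_apply, tracePairing_apply]
        simp only [hamiltonianField_X_true, smul_eq_mul, mul_neg, Finset.sum_neg_distrib]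
    _ = -(C * ((if α = γ then Matrix.single b a 1 else 0) * Pm N m β)).trace := by
        rw [tracePairing_eq_trace, map_derivation_mul, map_pderiv_false_Qm, map_pderiv_false_Pm,
          mul_zero, add_zero]
    _ = (if α = γ then -(Pm N m β * C) else 0 : Matrix (Fin m) (Fin m) _) a b := by
        split_ifs
        · rw [← mul_assoc, Matrix.trace_mul_cycle]
          simp [Matrix.trace_mul_single]
        · simp

lemma map_tracePairing_hamiltonianField_Qm_mul_Pm
    (C : Matrix (Fin m) (Fin m) (MvPolynomial (Idx N m) ℂ)) (α β γ δ : Fin N) :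
    (Qm N m γ * Pm N m δ).map (tracePairing hamiltonianField C (Qm N m α * Pm N m β))
      = (if β = γ then C * (Qm N m α * Pm N m δ) else 0)
        - (if α = δ then Qm N m γ * Pm N m β * C else 0) := by
  rw [map_derivation_mul, map_tracePairing_hamiltonianField_Qm,
    map_tracePairing_hamiltonianField_Pm]
  split_ifs <;> simp [mul_assoc, sub_eq_add_neg]

end CanonicalBracket

section ConfluentHamiltonians

variable {m : ℕ}

/-- The Hamiltonian vector field of a function of `A⁰`, `A¹`, `A₀`, `A₁` whose gradient with respect
to these matrices, under the trace form, is `C0s`, `C1s`, `Cu0`, `Cu1`. -/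
noncomputable def liePoissonField
    (C0s C1s Cu0 Cu1 : Matrix (Fin m) (Fin m) (MvPolynomial (Idx 4 m) ℂ)) :
    Derivation ℂ (MvPolynomial (Idx 4 m) ℂ) (MvPolynomial (Idx 4 m) ℂ) :=
  tracePairing hamiltonianField C0s (A0s m) + tracePairing hamiltonianField C1s (A1s m)
    + tracePairing hamiltonianField Cu0 (Au0 m) + tracePairing hamiltonianField Cu1 (Au1 m)

section LiePoissonField

variable (C0s C1s Cu0 Cu1 : Matrix (Fin m) (Fin m) (MvPolynomial (Idx 4 m) ℂ))

lemma map_liePoissonField (Y : Matrix (Fin m) (Fin m) (MvPolynomial (Idx 4 m) ℂ)) :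
    Y.map (liePoissonField C0s C1s Cu0 Cu1)
      = Y.map (tracePairing hamiltonianField C0s (Qm 4 m 0 * Pm 4 m 0))
        + Y.map (tracePairing hamiltonianField C1s (Qm 4 m 1 * Pm 4 m 1))
        + (Y.map (tracePairing hamiltonianField Cu0 (Qm 4 m 2 * Pm 4 m 2))
          + Y.map (tracePairing hamiltonianField Cu0 (Qm 4 m 3 * Pm 4 m 3)))
        + Y.map (tracePairing hamiltonianField Cu1 (Qm 4 m 2 * Pm 4 m 3)) := by
  rw [liePoissonField, A0s, A1s, Au0, Au1, map_add (tracePairing hamiltonianField Cu0)]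
  rfl

lemma map_liePoissonField_A0s : (A0s m).map (liePoissonField C0s C1s Cu0 Cu1) = ⁅C0s, A0s m⁆ := by
  simp [map_liePoissonField, A0s, map_tracePairing_hamiltonianField_Qm_mul_Pm, Ring.lie_def]

lemma map_liePoissonField_A1s : (A1s m).map (liePoissonField C0s C1s Cu0 Cu1) = ⁅C1s, A1s m⁆ := by
  simp [map_liePoissonField, A1s, map_tracePairing_hamiltonianField_Qm_mul_Pm, Ring.lie_def]

lemma map_liePoissonField_Au0 :
    (Au0 m).map (liePoissonField C0s C1s Cu0 Cu1) = ⁅Cu0, Au0 m⁆ + ⁅Cu1, Au1 m⁆ := by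
  rw [Au0, Matrix.map_add _ (map_add _), Au1]
  simp only [map_liePoissonField, map_tracePairing_hamiltonianField_Qm_mul_Pm, Ring.lie_def,
    Fin.reduceEq, ↓reduceIte, sub_self, add_zero, zero_add, zero_sub, sub_zero, mul_add, add_mul]
  abel

lemma map_liePoissonField_Au1 : (Au1 m).map (liePoissonField C0s C1s Cu0 Cu1) = ⁅Cu0, Au1 m⁆ := by
  simp [map_liePoissonField, Au1, map_tracePairing_hamiltonianField_Qm_mul_Pm, Ring.lie_def,
    sub_eq_add_neg, add_comm]

end LiePoissonField

lemma hamiltonianField_H1 (u t₁ : ℂ) :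
    hamiltonianField (H1 m u t₁)
      = liePoissonField (u⁻¹ • Au1 m) ((u - 1)⁻¹ • Au1 m) (t₁⁻¹ • Au0 m)
          (u⁻¹ • A0s m + (u - 1)⁻¹ • A1s m) := by
  have two_mul_inv_mul_two : (2 * t₁)⁻¹ * 2 = t₁⁻¹ := by field_simp
  rw [H1, map_add, Derivation.map_smul, derivation_trace_mul, derivation_trace_mul,
    map_add, map_smul, map_smul, ← two_smul ℂ, smul_smul, two_mul_inv_mul_two, liePoissonField]
  simp only [tracePairing_smul_left]
  abel

lemma map_hamiltonianField_H1_smul_A0s_add_smul_A1s (u t₁ a b : ℂ) :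
    (a • A0s m + b • A1s m).map (hamiltonianField (H1 m u t₁))
      = ⁅Au1 m, (a * u⁻¹) • A0s m + (b * (u - 1)⁻¹) • A1s m⁆ := by
  rw [Matrix.map_add _ (map_add _), Matrix.map_smul _ _ (Derivation.map_smul _ a),
    Matrix.map_smul _ _ (Derivation.map_smul _ b), hamiltonianField_H1, map_liePoissonField_A0s,
    map_liePoissonField_A1s]
  simp only [Ring.lie_def, smul_mul_assoc, mul_smul_comm, mul_add, add_mul, smul_sub, smul_smul]
  abel

lemma map_hamiltonianField_H1_Au0 (u t₁ : ℂ) :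
    (Au0 m).map (hamiltonianField (H1 m u t₁)) = ⁅u⁻¹ • A0s m + (u - 1)⁻¹ • A1s m, Au1 m⁆ := by
  rw [hamiltonianField_H1, map_liePoissonField_Au0, Ring.lie_def (t₁⁻¹ • Au0 m),
    smul_mul_assoc, mul_smul_comm, sub_self, zero_add]

lemma map_hamiltonianField_H1_Au1 (u t₁ : ℂ) :
    (Au1 m).map (hamiltonianField (H1 m u t₁)) = t₁⁻¹ • ⁅Au0 m, Au1 m⁆ := by
  rw [hamiltonianField_H1, map_liePoissonField_Au1, Ring.lie_def, Ring.lie_def, smul_mul_assoc,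
    mul_smul_comm, smul_sub]

theorem pois_Hu_H1 (u : ℂ) {t₁ : ℂ} (ht : t₁ ≠ 0) : pois (Hu m u t₁) (H1 m u t₁) = 0 := by
  rw [pois_antisymm, neg_eq_zero, ← hamiltonianField_apply, Hu]
  have flow_B := map_hamiltonianField_H1_smul_A0s_add_smul_A1s (m := m) u t₁ u⁻¹ (u - 1)⁻¹
  rw [← sq, ← sq, inv_pow, inv_pow] at flow_B
  have flow_K := map_hamiltonianField_H1_smul_A0s_add_smul_A1s (m := m) u t₁
    (u ^ 2)⁻¹ ((u - 1) ^ 2)⁻¹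
  have flow_A₀ := map_hamiltonianField_H1_Au0 (m := m) u t₁
  set B := u⁻¹ • A0s m + (u - 1)⁻¹ • A1s m
  set K := (u ^ 2)⁻¹ • A0s m + ((u - 1) ^ 2)⁻¹ • A1s m
  have trace_A₀B : hamiltonianField (H1 m u t₁) (Au0 m * B).trace = (⁅Au0 m, Au1 m⁆ * K).trace := by
    rw [derivation_trace_mul, tracePairing_eq_trace, tracePairing_eq_trace, flow_A₀, flow_B,
      trace_mul_lie_self, zero_add, trace_lie_mul_s16]
  have trace_A₁K : hamiltonianField (H1 m u t₁) (Au1 m * K).trace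
      = t₁⁻¹ • (⁅Au0 m, Au1 m⁆ * K).trace := by
    rw [derivation_trace_mul, tracePairing_eq_trace, tracePairing_eq_trace, flow_K,
      map_hamiltonianField_H1_Au1, trace_mul_lie_self, add_zero, Matrix.mul_smul,
      Matrix.trace_smul, Matrix.trace_mul_comm]
  rw [map_sub, Derivation.map_smul, trace_A₀B, trace_A₁K, smul_inv_smul₀ ht, sub_self]

lemma hasDerivAt_coeff_Hu (u t₁ : ℂ) (d : Idx 4 m →₀ ℕ) :
    HasDerivAt (fun s => coeff d (Hu m u s))
      (-coeff d (Au1 m * ((u ^ 2)⁻¹ • A0s m + ((u - 1) ^ 2)⁻¹ • A1s m)).trace) t₁ := by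
  simp only [Hu, coeff_sub, coeff_smul, smul_eq_mul]
  simpa only [id, one_mul] using ((hasDerivAt_id t₁).mul_const _).const_sub _

lemma hasDerivAt_coeff_H1 {u : ℂ} (h₀ : u ≠ 0) (h₁ : u ≠ 1) (t₁ : ℂ) (d : Idx 4 m →₀ ℕ) :
    HasDerivAt (fun s => coeff d (H1 m s t₁))
      (-coeff d (Au1 m * ((u ^ 2)⁻¹ • A0s m + ((u - 1) ^ 2)⁻¹ • A1s m)).trace) u := by
  have hasDerivAt_inv_sub_one : HasDerivAt (fun s : ℂ => (s - 1)⁻¹) (-((u - 1) ^ 2)⁻¹) u :=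
    (hasDerivAt_inv (sub_ne_zero.mpr h₁)).comp_sub_const u 1
  simp only [H1, mul_add, Matrix.mul_smul, Matrix.trace_add, Matrix.trace_smul, coeff_add,
    coeff_smul, smul_eq_mul, neg_add, ← neg_mul]
  exact (((hasDerivAt_inv h₀).mul_const _).add (hasDerivAt_inv_sub_one.mul_const _)).add_const _

end ConfluentHamiltonians

/-- (i) `{H_u, H_1} = 0` for every `u ∉ {0,1}` and `t₁ ≠ 0`; (ii) holding
the matrix indeterminates fixed (i.e. coefficientwise), `∂H_u/∂t₁ = ∂H_1/∂u`.  Hence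
`H_u du + H_1 dt₁` is closed along the flows and the isomonodromic τ-function of the
system with simple poles at `0, 1` and a second-order pole at `u` is well defined. -/
theorem statement16 (m : ℕ) (hm : 1 ≤ m) :
    (∀ u t₁ : ℂ, u ≠ 0 → u ≠ 1 → t₁ ≠ 0 → pois (Hu m u t₁) (H1 m u t₁) = 0) ∧
    (∀ u t₁ : ℂ, u ≠ 0 → u ≠ 1 → t₁ ≠ 0 →
      ∀ d : Idx 4 m →₀ ℕ,
        deriv (fun s : ℂ => coeff d (Hu m u s)) t₁
          = deriv (fun s : ℂ => coeff d (H1 m s t₁)) u) := by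
  refine ⟨fun u t₁ _ _ ht => pois_Hu_H1 u ht, fun u t₁ h₀ h₁ _ d => ?_⟩
  rw [(hasDerivAt_coeff_Hu u t₁ d).deriv, (hasDerivAt_coeff_H1 h₀ h₁ t₁ d).deriv]
end
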